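/- arXiv:1508.06842 — 4 statements merged into one kernel-verified Lean document; each statement's English description precedes it below -/
import Mathlib

section
/- Let ω_f be a real number with ω_f² ≠ 1. If the parameters satisfy ν₁² = 2ω_f² − λ₁² and σ = c_h(γ²ω_f² + 64ω_f⁴ − 128ω_f²λ₁² + 64λ₁⁴) / (96 r_g γ (ω_f² − 1)), then i·ω_f is an eigenvalue of A_u, i.e. det(i·ω_f·I₄ − A_u) = 0 (the pitch-flap flutter boundary). -/
/-- A root `s` of the quadratic pencil `s² M + s C + K` with `M` invertible is an eigenvalue of the
associated first-order state matrix. -/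
theorem det_smul_one_sub_companion_eq_zero {n F : Type*} [Fintype n] [DecidableEq n] [Field F]
    {M C K : Matrix n n F} {s : F} (hM : IsUnit M.det)
    (h : (s ^ 2 • M + s • C + K).det = 0) :
    (s • (1 : Matrix (n ⊕ n) (n ⊕ n) F) -
      Matrix.fromBlocks 0 1 (-(M⁻¹ * K)) (-(M⁻¹ * C))).det = 0 := by
  obtain ⟨v, hv, hLv⟩ := Matrix.exists_mulVec_eq_zero_iff.mpr h
  refine Matrix.exists_mulVec_eq_zero_iff.mp ⟨Sum.elim v (s • v), ?_, ?_⟩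
  · intro h0
    exact hv (funext fun i => congrFun h0 (Sum.inl i))
  · have hpencil : s ^ 2 • v + s • (M⁻¹ * C).mulVec v + (M⁻¹ * K).mulVec v = 0 := by
      have := congrArg (M⁻¹.mulVec ·) hLv
      simpa [Matrix.mulVec_mulVec, Matrix.mulVec_add, Matrix.mulVec_smul, Matrix.add_mulVec,
        Matrix.smul_mulVec, Matrix.nonsing_inv_mul M hM] using this
    rw [Matrix.sub_mulVec, Matrix.smul_mulVec, Matrix.one_mulVec, Matrix.fromBlocks_mulVec]
    ext (i | i)
    · simp
    · have := congrFun hpencil i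
      simp [Matrix.neg_mulVec, Matrix.mulVec_smul] at this ⊢
      linear_combination this

/-- If `ω_f² ≠ 1`, `ν₁² = 2ω_f² − λ₁²` and
`σ = c_h(γ²ω_f² + 64ω_f⁴ − 128ω_f²λ₁² + 64λ₁⁴)/(96 r_g γ (ω_f² − 1))`, then `i·ω_f` is an
eigenvalue of `A_u`, i.e. `det(i·ω_f·I₄ − A_u) = 0` (the pitch-flap flutter boundary). -/
theorem flutter_boundary_sufficient
    (γ lam₁ rg ch σ ν₁sq : ℝ)
    (hγ : 0 < γ) (hlam : 0 < lam₁) (hr : 0 < rg) (hc : 0 < ch)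
    (M C K : Matrix (Fin 2) (Fin 2) ℝ)
    (hM : M = !![1, -12 * rg * σ / ch; 0, 1])
    (hC : C = !![γ / 8, 0; 0, γ / 8])
    (hK : K = !![ν₁sq, -12 * rg * σ / ch; -γ / 8, lam₁ ^ 2])
    (Au : Matrix (Fin 2 ⊕ Fin 2) (Fin 2 ⊕ Fin 2) ℝ)
    (hAu : Au = Matrix.fromBlocks 0 1 (-(M⁻¹ * K)) (-(M⁻¹ * C)))
    (ωf : ℝ) (hω : ωf ^ 2 ≠ 1)
    (hν : ν₁sq = 2 * ωf ^ 2 - lam₁ ^ 2)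
    (hσ : σ = ch * (γ ^ 2 * ωf ^ 2 + 64 * ωf ^ 4 - 128 * ωf ^ 2 * lam₁ ^ 2 + 64 * lam₁ ^ 4) /
      (96 * rg * γ * (ωf ^ 2 - 1))) :
    ((Complex.I * (ωf : ℂ)) • (1 : Matrix (Fin 2 ⊕ Fin 2) (Fin 2 ⊕ Fin 2) ℂ) -
        Au.map (Complex.ofReal)).det = 0 := by
  have hdet : M.det = 1 := by simp [hM, Matrix.det_fin_two]
  have hmap : Au.map Complex.ofReal = Matrix.fromBlocks 0 1
      (-((M.map Complex.ofReal)⁻¹ * K.map Complex.ofReal))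
      (-((M.map Complex.ofReal)⁻¹ * C.map Complex.ofReal)) := by
    have hinv : (M.map Complex.ofReal)⁻¹ = M⁻¹.map Complex.ofReal := by
      refine Matrix.inv_eq_left_inv ?_
      have := congrArg (Complex.ofRealHom.mapMatrix ·)
        (Matrix.nonsing_inv_mul M (by simp [hdet]))
      simp only [map_mul, map_one] at this
      exact this
    have hneg (N : Matrix (Fin 2) (Fin 2) ℝ) : (-(M⁻¹ * N)).map Complex.ofReal =
        -(M⁻¹.map Complex.ofReal * N.map Complex.ofReal) := by
      have : Complex.ofRealHom.mapMatrix (-(M⁻¹ * N)) =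
          -(Complex.ofRealHom.mapMatrix M⁻¹ * Complex.ofRealHom.mapMatrix N) := by
        rw [map_neg, map_mul]
      exact this
    rw [hAu, hinv, Matrix.fromBlocks_map, hneg, hneg]
    simp
  rw [hmap]
  refine det_smul_one_sub_companion_eq_zero ?_ ?_
  · simp [hM, Matrix.det_fin_two]
  · have hω' : ωf ^ 2 - 1 ≠ 0 := sub_ne_zero.mpr hω
    have hcoupling : -12 * rg * σ / ch * (γ / 8) * (1 - ωf ^ 2) =
        (ωf ^ 2 - lam₁ ^ 2) ^ 2 + γ ^ 2 * ωf ^ 2 / 64 := by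
      rw [hσ]
      field_simp
      ring
    have hcouplingC := congrArg Complex.ofReal hcoupling
    push_cast at hcouplingC
    subst hM hC hK hν
    simp [Matrix.det_fin_two, mul_pow]
    linear_combination hcouplingC + (γ ^ 2 * ωf ^ 2 / 64 : ℂ) * Complex.I_sq
end

section
/- Let ω be a real number with ω ≠ 0 and ω² ≠ 1. If i·ω is an eigenvalue of A_u, i.e. det(i·ω·I₄ − A_u) = 0, then necessarily ν₁² = 2ω² − λ₁² and σ = c_h(γ²ω² + 64ω⁴ − 128ω²λ₁² + 64λ₁⁴) / (96 r_g γ (ω² − 1)). -/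
open Matrix in
/-- The characteristic matrix of a block companion matrix has the determinant of the associated
quadratic matrix polynomial. -/
theorem det_smul_one_sub_companion {n F : Type*} [Fintype n] [DecidableEq n] [Field F]
    (P Q : Matrix n n F) {s : F} (hs : s ≠ 0) :
    (s • (1 : Matrix (n ⊕ n) (n ⊕ n) F) - fromBlocks 0 1 (-P) (-Q)).det =
      (s ^ 2 • (1 : Matrix n n F) + s • Q + P).det := by
  have hinv : (s • (1 : Matrix n n F)) * (s⁻¹ • 1) = 1 := by simp [smul_smul, hs]
  let : Invertible (s • (1 : Matrix n n F)) := invertibleOfRightInverse _ _ hinv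
  have hInv : ⅟(s • (1 : Matrix n n F)) = s⁻¹ • 1 := invOf_eq_right_inv hinv
  have hblocks : s • (1 : Matrix (n ⊕ n) (n ⊕ n) F) - fromBlocks 0 1 (-P) (-Q) =
      fromBlocks (s • 1) (-1) P (s • 1 + Q) := by
    rw [← fromBlocks_one, fromBlocks_smul, sub_eq_add_neg, fromBlocks_neg, fromBlocks_add]
    simp
  rw [hblocks, det_fromBlocks₁₁, hInv, ← det_mul]
  congr 1
  simp [smul_smul, hs, pow_two, smul_add]

/-- If `ω ≠ 0`, `ω² ≠ 1`, and `i·ω` is an eigenvalue of `A_u`, i.e.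
`det(i·ω·I₄ − A_u) = 0`, then necessarily `ν₁² = 2ω² − λ₁²` and
`σ = c_h(γ²ω² + 64ω⁴ − 128ω²λ₁² + 64λ₁⁴)/(96 r_g γ (ω² − 1))`. -/
theorem flutter_boundary_necessary
    (γ lam₁ rg ch σ ν₁sq : ℝ)
    (hγ : 0 < γ) (hlam : 0 < lam₁) (hr : 0 < rg) (hc : 0 < ch)
    (M C K : Matrix (Fin 2) (Fin 2) ℝ)
    (hM : M = !![1, -12 * rg * σ / ch; 0, 1])
    (hC : C = !![γ / 8, 0; 0, γ / 8])
    (hK : K = !![ν₁sq, -12 * rg * σ / ch; -γ / 8, lam₁ ^ 2])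
    (Au : Matrix (Fin 2 ⊕ Fin 2) (Fin 2 ⊕ Fin 2) ℝ)
    (hAu : Au = Matrix.fromBlocks 0 1 (-(M⁻¹ * K)) (-(M⁻¹ * C)))
    (ω : ℝ) (hω0 : ω ≠ 0) (hω1 : ω ^ 2 ≠ 1)
    (hroot : ((Complex.I * (ω : ℂ)) • (1 : Matrix (Fin 2 ⊕ Fin 2) (Fin 2 ⊕ Fin 2) ℂ) -
        Au.map (Complex.ofReal)).det = 0) :
    ν₁sq = 2 * ω ^ 2 - lam₁ ^ 2 ∧
      σ = ch * (γ ^ 2 * ω ^ 2 + 64 * ω ^ 4 - 128 * ω ^ 2 * lam₁ ^ 2 + 64 * lam₁ ^ 4) /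
        (96 * rg * γ * (ω ^ 2 - 1)) := by
  subst hM hC hK hAu
  have hs : Complex.I * (ω : ℂ) ≠ 0 := by simp [hω0]
  have hMinv : (!![1, -12 * rg * σ / ch; 0, 1] : Matrix (Fin 2) (Fin 2) ℝ)⁻¹ =
      !![1, 12 * rg * σ / ch; 0, 1] := by
    apply Matrix.inv_eq_right_inv
    rw [Matrix.mul_fin_two, Matrix.one_fin_two]
    congr 1
    simp
    ring
  rw [Matrix.fromBlocks_map, Matrix.map_neg _ (by simp), Matrix.map_neg _ (by simp),
    Matrix.map_zero _ (by simp), Matrix.map_one _ (by simp) (by simp),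
    det_smul_one_sub_companion _ _ hs, hMinv, Matrix.det_fin_two] at hroot
  have hneg : -12 * rg * σ / ch = -(12 * rg * σ / ch) := by ring
  obtain ⟨a, ha⟩ : ∃ a, a = 12 * rg * σ / ch := ⟨_, rfl⟩
  obtain ⟨g, hg⟩ : ∃ g, g = γ / 8 := ⟨_, rfl⟩
  rw [hneg, neg_div, ← ha, ← hg] at hroot
  have hre := congrArg Complex.re hroot
  have him := congrArg Complex.im hroot
  simp [pow_two] at hre him
  have hg0 : g ≠ 0 := by rw [hg]; positivity
  have hν : ν₁sq = 2 * ω ^ 2 - lam₁ ^ 2 := by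
    apply mul_left_cancel₀ (mul_ne_zero hg0 hω0)
    linear_combination him
  have hω : ω ^ 2 - 1 ≠ 0 := sub_ne_zero.mpr hω1
  refine ⟨hν, ?_⟩
  have hreal : g * a * (ω ^ 2 - 1) = (ω ^ 2 - lam₁ ^ 2) ^ 2 + g ^ 2 * ω ^ 2 := by
    linear_combination hre + (ω ^ 2 - lam₁ ^ 2) * hν
  rw [ha, hg] at hreal
  field_simp at hreal ⊢
  linear_combination hreal
end

section
/- For every choice of control gains a, b ∈ ℝ and every delay τ ∈ ℝ, the closed-loop characteristic function f(s) = det(s·I₄ − A − e^{−τs}·A_d) satisfies f(0) = det(−A_u); in particular s = 0 is a characteristic root of the controlled system if and only if det K = 0, so the delayed feedback control can neither create nor remove a characteristic root at the origin (it cannot stabilize pitch divergence). -/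
/-- A block companion matrix is singular iff its lower left block is. -/
theorem Matrix.det_fromBlocks_zero_one_eq_zero_iff {n R : Type*} [Fintype n] [DecidableEq n]
    [CommRing R] (X Y : Matrix n n R) :
    (Matrix.fromBlocks (0 : Matrix n n R) 1 X Y).det = 0 ↔ X.det = 0 := by
  have hfac : Matrix.fromBlocks (0 : Matrix n n R) 1 X Y =
      Matrix.fromBlocks (1 : Matrix n n R) 0 Y X * Matrix.fromBlocks 0 1 1 0 := by
    simp [Matrix.fromBlocks_multiply]
  have hswap : IsUnit (Matrix.fromBlocks 0 1 1 0 : Matrix (n ⊕ n) (n ⊕ n) R).det := by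
    refine IsUnit.of_mul_eq_one (Matrix.fromBlocks 0 1 1 0 : Matrix (n ⊕ n) (n ⊕ n) R).det ?_
    rw [← Matrix.det_mul]
    simp [Matrix.fromBlocks_multiply]
  rw [hfac, Matrix.det_mul, Matrix.det_fromBlocks_zero₁₂, Matrix.det_one, one_mul,
    hswap.mul_left_eq_zero]

/-- For every choice of the gains `a, b` and every delay `τ`, the closed-loop characteristic
function `f(s) = det(s·I₄ − A − e^{−τs}·A_d)` satisfies `f(0) = det(−A_u)`; in particular
`s = 0` is a characteristic root of the controlled system iff `det K = 0`, so the delayed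
feedback can neither create nor remove a characteristic root at the origin. -/
theorem delayed_feedback_cannot_stabilize_pitch_divergence
    (γ lam₁ rg ch σ ν₁ : ℝ)
    (hγ : 0 < γ) (hlam : 0 < lam₁) (hr : 0 < rg) (hc : 0 < ch) (hσ : 0 < σ) (hν : 0 < ν₁)
    (M C K : Matrix (Fin 2) (Fin 2) ℝ)
    (hM : M = !![1, -12 * rg * σ / ch; 0, 1])
    (hC : C = !![γ / 8, 0; 0, γ / 8])
    (hK : K = !![ν₁ ^ 2, -12 * rg * σ / ch; -γ / 8, lam₁ ^ 2])
    (Au : Matrix (Fin 2 ⊕ Fin 2) (Fin 2 ⊕ Fin 2) ℝ)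
    (hAu : Au = Matrix.fromBlocks 0 1 (-(M⁻¹ * K)) (-(M⁻¹ * C)))
    (a b τ : ℝ)
    (E F : Matrix (Fin 2) (Fin 2) ℝ)
    (hE : E = !![0, 3777 * ν₁ ^ 2 * a; 0, 0])
    (hF : F = !![0, 3777 * ν₁ ^ 2 * b; 0, 0])
    (A Ad : Matrix (Fin 2 ⊕ Fin 2) (Fin 2 ⊕ Fin 2) ℝ)
    (hA : A = Matrix.fromBlocks 0 1 (-(M⁻¹ * K) + E) (-(M⁻¹ * C) + F))
    (hAd : Ad = Matrix.fromBlocks 0 0 (-E) (-F))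
    (f : ℂ → ℂ)
    (hf : ∀ s : ℂ, f s =
      (s • (1 : Matrix (Fin 2 ⊕ Fin 2) (Fin 2 ⊕ Fin 2) ℂ) - A.map Complex.ofReal -
        Complex.exp (-((τ : ℂ) * s)) • Ad.map Complex.ofReal).det) :
    f 0 = (-(Au.map Complex.ofReal)).det ∧ (f 0 = 0 ↔ K.det = 0) := by
  have hsum : A + Ad = Au := by
    rw [hA, hAd, hAu, Matrix.fromBlocks_add]
    simp
  have hf0 : f 0 = (-(Au.map Complex.ofReal)).det := by
    rw [hf, ← hsum, Matrix.map_add _ Complex.ofReal_add]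
    congr 1
    simp [sub_eq_add_neg, add_comm]
  have hMdet : M.det = 1 := by simp [hM, Matrix.det_fin_two]
  have hdet : (-(Au.map Complex.ofReal)).det = ((-Au).det : ℂ) := by
    have hneg : -(Au.map Complex.ofReal) = Complex.ofRealHom.mapMatrix (-Au) := by
      rw [map_neg]
      rfl
    rw [hneg, ← RingHom.map_det]
    rfl
  refine ⟨hf0, ?_⟩
  rw [hf0, hdet, Complex.ofReal_eq_zero, Matrix.det_neg, hAu]
  simp [Matrix.det_fromBlocks_zero_one_eq_zero_iff, Matrix.det_neg, Matrix.det_nonsing_inv, hMdet]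
end

section
/- The set of real frequencies ω for which there exists a real delay τ with det(i·ω·I₄ − A − e^{−i·ω·τ}·A_d) = 0 is finite, containing at most 8 elements. (The function ω ↦ |det(i·ω·I₄ − A)|² − |det(i·ω·I₄ − A − A_d) − det(i·ω·I₄ − A)|² is a polynomial in ω of degree 8 with leading coefficient 1, hence has at most 8 real roots, and every crossing frequency must be one of them.) -/
open Polynomial in
/-- The imaginary zeros of a quasi-polynomial `P(s) + e^{-sτ} Q(s)`, with `P` a monic real quartic
and `Q` real of degree at most one, taken over all delays `τ`, are zeros of the monic polynomial
`|P(iω)|² - |Q(iω)|²` of degree 8 in `ω`. -/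
theorem quartic_crossing_frequencies (c₀ c₁ c₂ c₃ d₀ d₁ : ℝ) :
    ∃ p : ℝ[X], p.Monic ∧ p.natDegree = 8 ∧ ∀ ω τ : ℝ,
      (Complex.I * ω) ^ 4 + c₃ * (Complex.I * ω) ^ 3 + c₂ * (Complex.I * ω) ^ 2
        + c₁ * (Complex.I * ω) + c₀
        + Complex.exp (-(Complex.I * ω * τ)) * (d₁ * (Complex.I * ω) + d₀) = 0 → p.IsRoot ω := by
  refine ⟨(X ^ 4 - C c₂ * X ^ 2 + C c₀) ^ 2 + (C c₁ * X - C c₃ * X ^ 3) ^ 2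
    - (C (d₁ ^ 2) * X ^ 2 + C (d₀ ^ 2)), ?_, ?_, ?_⟩
  · monicity!
  · compute_degree!
  intro ω τ h
  have hexp : ‖Complex.exp (-(Complex.I * ω * τ))‖ = 1 := by
    simp [Complex.norm_exp]
  have hnorm := congrArg Complex.normSq (eq_neg_of_add_eq_zero_left h)
  rw [Complex.normSq_neg, Complex.normSq_mul, Complex.normSq_eq_norm_sq (Complex.exp _), hexp,
    one_pow, one_mul] at hnorm
  have hP : (Complex.I * ω) ^ 4 + c₃ * (Complex.I * ω) ^ 3 + c₂ * (Complex.I * ω) ^ 2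
        + c₁ * (Complex.I * ω) + c₀
      = ((ω ^ 4 - c₂ * ω ^ 2 + c₀ : ℝ) : ℂ) + ((c₁ * ω - c₃ * ω ^ 3 : ℝ) : ℂ) * Complex.I := by
    push_cast
    linear_combination ((ω : ℂ) ^ 4 * (Complex.I ^ 2 - 1) + c₃ * ω ^ 3 * Complex.I
      + c₂ * ω ^ 2) * Complex.I_sq
  have hQ : (d₁ * (Complex.I * ω) + d₀ : ℂ) = (d₀ : ℂ) + ((d₁ * ω : ℝ) : ℂ) * Complex.I := by
    push_cast
    ring
  rw [hP, hQ, Complex.normSq_add_mul_I, Complex.normSq_add_mul_I] at hnorm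
  simp only [IsRoot.def, eval_add, eval_sub, eval_mul, eval_pow, eval_X, eval_C]
  linear_combination hnorm

/-- The determinant of a block matrix whose upper blocks are those of `s - A` for a block companion
matrix `A`. -/
theorem det_fromBlocks_smul_one_neg_one {R n : Type*} [CommRing R] [Fintype n] [DecidableEq n]
    (s : R) (X Y : Matrix n n R) :
    (Matrix.fromBlocks (s • 1) (-1) X Y).det = (X + s • Y).det := by
  have hmul : Matrix.fromBlocks (s • (1 : Matrix n n R)) (-1 : Matrix n n R) X Y
        * Matrix.fromBlocks (1 : Matrix n n R) 0 (s • 1 - 1) (1 : Matrix n n R)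
      = Matrix.fromBlocks 1 (-1) (X + s • Y - Y) Y := by
    simp [Matrix.fromBlocks_multiply, Matrix.mul_sub, add_sub_assoc]
  have hdet := congrArg Matrix.det hmul
  rw [Matrix.det_mul, Matrix.det_fromBlocks_zero₁₂, Matrix.det_fromBlocks_one₁₁] at hdet
  simpa using hdet

/-- The set of real crossing frequencies `ω`, i.e. those for which some real delay `τ`
yields `det(i·ω·I₄ − A − e^{−i·ω·τ}·A_d) = 0`, is finite with at most 8 elements. -/
theorem crossing_frequencies_finite
    (γ lam₁ rg ch σ ν₁ : ℝ)
    (hγ : 0 < γ) (hlam : 0 < lam₁) (hr : 0 < rg) (hc : 0 < ch) (hσ : 0 < σ) (hν : 0 < ν₁)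
    (M C K : Matrix (Fin 2) (Fin 2) ℝ)
    (hM : M = !![1, -12 * rg * σ / ch; 0, 1])
    (hC : C = !![γ / 8, 0; 0, γ / 8])
    (hK : K = !![ν₁ ^ 2, -12 * rg * σ / ch; -γ / 8, lam₁ ^ 2])
    (a b : ℝ)
    (E F : Matrix (Fin 2) (Fin 2) ℝ)
    (hE : E = !![0, 3777 * ν₁ ^ 2 * a; 0, 0])
    (hF : F = !![0, 3777 * ν₁ ^ 2 * b; 0, 0])
    (A Ad : Matrix (Fin 2 ⊕ Fin 2) (Fin 2 ⊕ Fin 2) ℂ)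
    (hA : A = (Matrix.fromBlocks 0 1 (-(M⁻¹ * K) + E) (-(M⁻¹ * C) + F)).map Complex.ofReal)
    (hAd : Ad = (Matrix.fromBlocks 0 0 (-E) (-F)).map Complex.ofReal) :
    {ω : ℝ | ∃ τ : ℝ,
      ((Complex.I * (ω : ℂ)) • (1 : Matrix (Fin 2 ⊕ Fin 2) (Fin 2 ⊕ Fin 2) ℂ) - A -
        Complex.exp (-(Complex.I * (ω : ℂ) * (τ : ℂ))) • Ad).det = 0}.Finite ∧
    {ω : ℝ | ∃ τ : ℝ,
      ((Complex.I * (ω : ℂ)) • (1 : Matrix (Fin 2 ⊕ Fin 2) (Fin 2 ⊕ Fin 2) ℂ) - A -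
        Complex.exp (-(Complex.I * (ω : ℂ) * (τ : ℂ))) • Ad).det = 0}.ncard ≤ 8 := by
  obtain ⟨p, hp, hdeg, hroot⟩ := quartic_crossing_frequencies
    ((ν₁ ^ 2 + -12 * rg * σ / ch * (γ / 8)) * lam₁ ^ 2
      + γ / 8 * (-12 * rg * σ / ch * (1 - lam₁ ^ 2) - 3777 * ν₁ ^ 2 * a))
    (γ / 8 * (ν₁ ^ 2 + -12 * rg * σ / ch * (γ / 8) + lam₁ ^ 2)
      - γ / 8 * (-12 * rg * σ / ch * (γ / 8) + 3777 * ν₁ ^ 2 * b))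
    ((γ / 8) ^ 2 + ν₁ ^ 2 + -12 * rg * σ / ch * (γ / 8) + lam₁ ^ 2)
    (2 * (γ / 8))
    (γ / 8 * (3777 * ν₁ ^ 2 * a)) (γ / 8 * (3777 * ν₁ ^ 2 * b))
  have hMinv : M⁻¹ = !![1, -(-12 * rg * σ / ch); 0, 1] := by
    apply Matrix.inv_eq_right_inv
    rw [hM, Matrix.mul_fin_two, Matrix.one_fin_two]
    simp
  have hsub : {ω : ℝ | ∃ τ : ℝ,
      ((Complex.I * (ω : ℂ)) • (1 : Matrix (Fin 2 ⊕ Fin 2) (Fin 2 ⊕ Fin 2) ℂ) - A -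
        Complex.exp (-(Complex.I * (ω : ℂ) * (τ : ℂ))) • Ad).det = 0} ⊆ p.roots.toFinset := by
    rintro ω ⟨τ, h⟩
    rw [Finset.mem_coe, Multiset.mem_toFinset, Polynomial.mem_roots hp.ne_zero]
    apply hroot ω τ
    rw [← h]
    generalize Complex.exp (-(Complex.I * ω * τ)) = e
    generalize Complex.I * (ω : ℂ) = s
    have hblocks : s • (1 : Matrix (Fin 2 ⊕ Fin 2) (Fin 2 ⊕ Fin 2) ℂ) - A - e • Ad
        = Matrix.fromBlocks (s • 1) (-1)
          ((M⁻¹ * K - E).map Complex.ofReal + e • E.map Complex.ofReal)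
          (s • 1 + (M⁻¹ * C - F).map Complex.ofReal + e • F.map Complex.ofReal) := by
      rw [hA, hAd]
      ext (i | i) (j | j) <;> simp [Matrix.one_apply, apply_ite Complex.ofReal] <;> ring
    rw [hblocks, det_fromBlocks_smul_one_neg_one, Matrix.det_fin_two, hMinv, hC, hK, hE, hF]
    simp
    ring
  refine ⟨p.roots.toFinset.finite_toSet.subset hsub, ?_⟩
  calc _ ≤ (p.roots.toFinset : Set ℝ).ncard := Set.ncard_le_ncard hsub
    _ = p.roots.toFinset.card := Set.ncard_coe_finset _
    _ ≤ p.roots.card := Multiset.toFinset_card_le _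
    _ ≤ 8 := hdeg ▸ p.card_roots'
end
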